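/- arXiv:2202.03585 — 4 statements merged into one kernel-verified Lean document; each statement's English description precedes it below -/
import Mathlib

section
/- Let k be an algebraically closed field of characteristic zero and a ∈ k^×. Then T_a is an abelian subgroup of G_{2,a} which equals its own centralizer in G_{2,a}: { g ∈ G_{2,a} : g·t = t·g for all t ∈ T_a } = T_a. In particular T_a is a maximal abelian subgroup of G_{2,a} (so a maximal torus). -/
/-!
A diagonal matrix `diag(d₁, …, d₇)` preserving `F_a` satisfies
`d₁d₄d₇ = d₁d₅d₆ = d₂d₃d₇ = d₂d₄d₆ = 1`. Its determinant is `d₄(d₁d₅d₆)(d₂d₃d₇)`, so determinant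
one forces `d₄ = 1`, and the other relations then express every `d_i` through `d₁` and `d₂` exactly
as in `[d₁, d₂]`. Hence `T_a` is the set of diagonal matrices in `G_{2,a}`.

A matrix commuting with `T_a` is itself diagonal as soon as `T_a` tells the seven coordinates apart.
If `t ≠ 0` and `t² ≠ 1`, the two elements `[t, 1]` and `[1, t]` already do so; such a `t` exists in
every field with more than three elements.
-/

open Matrix

noncomputable section

/-- `e_i^* ∧ e_j^* ∧ e_l^*` evaluated at `(u, v, w)` on `k^7`. -/
def wedge3 {k : Type*} [CommRing k] (i j l : Fin 7) (u v w : Fin 7 → k) : k :=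
  u i * (v j * w l - v l * w j) - u j * (v i * w l - v l * w i) +
    u l * (v i * w j - v j * w i)

/-- The paper's alternating trilinear form
`F_a = e₁^*∧e₄^*∧e₇^* + e₁^*∧e₅^*∧e₆^* + e₂^*∧e₃^*∧e₇^* − e₂^*∧e₄^*∧e₆^* + a·e₃^*∧e₄^*∧e₅^*`. -/
def Fgen {k : Type*} [CommRing k] (a : k) (u v w : Fin 7 → k) : k :=
  wedge3 0 3 6 u v w + wedge3 0 4 5 u v w + wedge3 1 2 6 u v w -
    wedge3 1 3 5 u v w + a * wedge3 2 3 4 u v w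

/-- The group `G_{2,a}`, the determinant-one stabilizer of `F_a` in `GL₇(k)`. -/
def G2Set {k : Type*} [CommRing k] (a : k) : Set (Matrix (Fin 7) (Fin 7) k) :=
  {g | g.det = 1 ∧ ∀ u v w : Fin 7 → k,
    Fgen a (g.mulVec u) (g.mulVec v) (g.mulVec w) = Fgen a u v w}

/-- The torus element `[t₁, t₂] = diag(t₁, t₂, t₁t₂⁻¹, 1, t₁⁻¹t₂, t₂⁻¹, t₁⁻¹)`. -/
def diagT {k : Type*} [Field k] (t₁ t₂ : k) : Matrix (Fin 7) (Fin 7) k :=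
  Matrix.diagonal ![t₁, t₂, t₁ * t₂⁻¹, 1, t₁⁻¹ * t₂, t₂⁻¹, t₁⁻¹]

/-- The torus `T_a = { [t₁,t₂] : t₁, t₂ ∈ k^× }`. -/
def TaSet {k : Type*} [Field k] : Set (Matrix (Fin 7) (Fin 7) k) :=
  {M | ∃ t₁ t₂ : k, t₁ ≠ 0 ∧ t₂ ≠ 0 ∧ M = diagT t₁ t₂}

theorem exists_ne_zero_and_sq_ne_one {R : Type*} [Ring R] [NoZeroDivisors R]
    (hR : 3 < ENat.card R) : ∃ t : R, t ≠ 0 ∧ t ^ 2 ≠ 1 := by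
  classical
  by_contra! hall
  have hsub : Set.univ ⊆ (({0, 1, -1} : Finset R) : Set R) := by
    intro t _
    simpa [or_iff_not_imp_left (a := t = 0)] using hall t
  refine hR.not_ge ?_
  calc ENat.card R = (Set.univ : Set R).encard := (Set.encard_univ R).symm
    _ ≤ (({0, 1, -1} : Finset R) : Set R).encard := Set.encard_le_encard hsub
    _ ≤ 3 := by
      rw [Set.encard_coe_eq_coe_finsetCard]
      exact_mod_cast Finset.card_le_three

section DiagonalCentralizer

variable {n R : Type*} [Fintype n] [DecidableEq n]
  [NonUnitalNonAssocCommSemiring R] [IsRightCancelMulZero R]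

theorem apply_eq_zero_of_commute_diagonal {A : Matrix n n R} {d : n → R}
    (h : Commute A (diagonal d)) {i j : n} (hij : d i ≠ d j) : A i j = 0 := by
  have hentry : d i * A i j = d j * A i j := by
    simpa only [mul_diagonal, diagonal_mul, mul_comm (A i j)] using (congrFun₂ h.eq i j).symm
  by_contra hA
  exact hij (mul_right_cancel₀ hA hentry)

theorem isDiag_of_forall_commute_diagonal {A : Matrix n n R} {S : Set (n → R)}
    (hS : S.SeparatesPoints) (h : ∀ d ∈ S, Commute A (diagonal d)) : A.IsDiag := by
  intro i j hij
  obtain ⟨d, hd, hne⟩ := hS hij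
  exact apply_eq_zero_of_commute_diagonal (h d hd) hne

end DiagonalCentralizer

section DiagonalStabilizer

variable {R : Type*} [CommRing R]

theorem wedge3_diagonal_mulVec (d : Fin 7 → R) (i j l : Fin 7) (u v w : Fin 7 → R) :
    wedge3 i j l (diagonal d *ᵥ u) (diagonal d *ᵥ v) (diagonal d *ᵥ w) =
      d i * d j * d l * wedge3 i j l u v w := by
  simp only [wedge3, mulVec_diagonal]
  ring

theorem diagonal_preserves_Fgen_iff (a : R) (d : Fin 7 → R) :
    (∀ u v w : Fin 7 → R, Fgen a (diagonal d *ᵥ u) (diagonal d *ᵥ v) (diagonal d *ᵥ w) =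
        Fgen a u v w) ↔
      d 0 * d 3 * d 6 = 1 ∧ d 0 * d 4 * d 5 = 1 ∧ d 1 * d 2 * d 6 = 1 ∧ d 1 * d 3 * d 5 = 1 ∧
        d 2 * d 3 * d 4 * a = a := by
  simp only [Fgen, wedge3_diagonal_mulVec]
  constructor
  · intro h
    have hbasis (i j l : Fin 7) := h (Pi.single i 1) (Pi.single j 1) (Pi.single l 1)
    refine ⟨?_, ?_, ?_, ?_, ?_⟩
    · simpa [wedge3] using hbasis 0 3 6
    · simpa [wedge3] using hbasis 0 4 5
    · simpa [wedge3] using hbasis 1 2 6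
    · simpa [wedge3] using hbasis 1 3 5
    · simpa [wedge3, mul_comm a] using hbasis 2 3 4
  · rintro ⟨h036, h045, h126, h135, h234⟩ u v w
    linear_combination wedge3 0 3 6 u v w * h036 + wedge3 0 4 5 u v w * h045 +
      wedge3 1 2 6 u v w * h126 - wedge3 1 3 5 u v w * h135 + wedge3 2 3 4 u v w * h234

theorem diagonal_mem_G2Set_iff (a : R) (d : Fin 7 → R) :
    diagonal d ∈ G2Set a ↔
      d 3 = 1 ∧ d 0 * d 6 = 1 ∧ d 1 * d 5 = 1 ∧ d 2 = d 0 * d 5 ∧ d 4 = d 1 * d 6 := by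
  rw [G2Set, Set.mem_ofPred_eq, diagonal_preserves_Fgen_iff, det_diagonal, Fin.prod_univ_seven]
  constructor
  · rintro ⟨hdet, h036, h045, h126, h135, -⟩
    have h3 : d 3 = 1 := by
      linear_combination hdet - d 3 * d 1 * d 2 * d 6 * h045 - d 3 * h126
    have h06 : d 0 * d 6 = 1 := by simpa only [h3, mul_one] using h036
    have h15 : d 1 * d 5 = 1 := by simpa only [h3, mul_one] using h135
    refine ⟨h3, h06, h15, ?_, ?_⟩
    · linear_combination d 0 * d 5 * h126 - d 2 * d 1 * d 5 * h06 - d 2 * h15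
    · linear_combination d 1 * d 6 * h045 - d 4 * d 1 * d 5 * h06 - d 4 * h15
  · rintro ⟨h3, h06, h15, h2, h4⟩
    have h0156 : d 0 * d 6 * (d 1 * d 5) = 1 := by rw [h06, h15, one_mul]
    have h24 : d 2 * d 4 = 1 := by
      rw [h2, h4]
      linear_combination h0156
    rw [h3]
    refine ⟨?_, ?_, ?_, ?_, ?_, ?_⟩
    · linear_combination d 2 * d 4 * h0156 + h24
    · linear_combination h06
    · linear_combination d 0 * d 5 * h4 + h0156
    · linear_combination d 1 * d 6 * h2 + h0156
    · linear_combination h15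
    · linear_combination a * h24

end DiagonalStabilizer

section Torus

variable {k : Type*} [Field k]

theorem diagonal_mem_TaSet_iff (d : Fin 7 → k) :
    diagonal d ∈ TaSet ↔
      d 3 = 1 ∧ d 0 * d 6 = 1 ∧ d 1 * d 5 = 1 ∧ d 2 = d 0 * d 5 ∧ d 4 = d 1 * d 6 := by
  constructor
  · rintro ⟨t₁, t₂, ht₁, ht₂, hd⟩
    obtain rfl := diagonal_injective hd
    simp [ht₁, ht₂, mul_comm t₂]
  · rintro ⟨h3, h06, h15, h2, h4⟩
    refine ⟨d 0, d 1, left_ne_zero_of_mul_eq_one h06, left_ne_zero_of_mul_eq_one h15, ?_⟩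
    have h6 : d 6 = (d 0)⁻¹ := eq_inv_of_mul_eq_one_right h06
    have h5 : d 5 = (d 1)⁻¹ := eq_inv_of_mul_eq_one_right h15
    rw [diagT]
    congr 1
    ext i
    fin_cases i <;> simp [h2, h3, h4, h5, h6, mul_comm (d 1)]

theorem isDiag_of_mem_TaSet {g : Matrix (Fin 7) (Fin 7) k} (hg : g ∈ TaSet) : g.IsDiag := by
  obtain ⟨t₁, t₂, -, -, rfl⟩ := hg
  exact isDiag_diagonal _

theorem mem_TaSet_iff_mem_G2Set_and_isDiag (a : k) (g : Matrix (Fin 7) (Fin 7) k) :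
    g ∈ TaSet ↔ g ∈ G2Set a ∧ g.IsDiag := by
  have hdiagonal (d : Fin 7 → k) : diagonal d ∈ TaSet ↔ diagonal d ∈ G2Set a := by
    rw [diagonal_mem_TaSet_iff, diagonal_mem_G2Set_iff]
  constructor
  · intro hg
    have hdiag := isDiag_of_mem_TaSet hg
    rw [← hdiag.diagonal_diag] at hg
    exact ⟨hdiag.diagonal_diag ▸ (hdiagonal _).mp hg, hdiag⟩
  · rintro ⟨hg, hdiag⟩
    rw [← hdiag.diagonal_diag] at hg ⊢
    exact (hdiagonal _).mpr hg

theorem commute_of_mem_TaSet {s t : Matrix (Fin 7) (Fin 7) k} (hs : s ∈ TaSet) (ht : t ∈ TaSet) :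
    Commute s t := by
  rw [← (isDiag_of_mem_TaSet hs).diagonal_diag, ← (isDiag_of_mem_TaSet ht).diagonal_diag]
  exact commute_diagonal _ _

theorem separatesPoints_setOf_diagonal_mem_TaSet {t : k} (ht : t ≠ 0) (ht2 : t ^ 2 ≠ 1) :
    {d : Fin 7 → k | diagonal d ∈ TaSet}.SeparatesPoints := by
  have hone : t ≠ 1 := fun h => ht2 (by simp [h])
  have hinv : t ≠ t⁻¹ := fun h => ht2 (by rw [sq, mul_eq_one_iff_eq_inv₀ ht, ← h])
  intro i j hij
  by_cases hfst : (![t, 1, t, 1, t⁻¹, 1, t⁻¹] : Fin 7 → k) i = ![t, 1, t, 1, t⁻¹, 1, t⁻¹] j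
  · refine ⟨![1, t, t⁻¹, 1, t, t⁻¹, 1], ⟨1, t, one_ne_zero, ht, by simp [diagT]⟩, ?_⟩
    fin_cases i <;> fin_cases j <;> simp_all [eq_comm]
  · exact ⟨_, ⟨t, 1, ht, one_ne_zero, by simp [diagT]⟩, hfst⟩

theorem isDiag_of_forall_commute_TaSet (hk : 3 < ENat.card k) {g : Matrix (Fin 7) (Fin 7) k}
    (hg : ∀ t ∈ TaSet, Commute g t) : g.IsDiag := by
  obtain ⟨t, ht, ht2⟩ := exists_ne_zero_and_sq_ne_one hk
  exact isDiag_of_forall_commute_diagonal (separatesPoints_setOf_diagonal_mem_TaSet ht ht2)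
    fun d hd => hg (diagonal d) hd

end Torus

theorem TaSet_self_centralizing_general {k : Type*} [Field k] (hk : 3 < ENat.card k) (a : k) :
    (TaSet (k := k)) ⊆ G2Set a ∧
    (∀ s ∈ (TaSet (k := k)), ∀ t ∈ (TaSet (k := k)), s * t = t * s) ∧
    {g | g ∈ G2Set a ∧ ∀ t ∈ (TaSet (k := k)), g * t = t * g} = (TaSet (k := k)) := by
  have hsub : (TaSet (k := k)) ⊆ G2Set a := fun g hg =>
    ((mem_TaSet_iff_mem_G2Set_and_isDiag a g).mp hg).1
  refine ⟨hsub, fun s hs t ht => commute_of_mem_TaSet hs ht, Set.Subset.antisymm ?_ ?_⟩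
  · rintro g ⟨hg, hcomm⟩
    exact (mem_TaSet_iff_mem_G2Set_and_isDiag a g).mpr
      ⟨hg, isDiag_of_forall_commute_TaSet hk hcomm⟩
  · exact fun g hg => ⟨hsub hg, fun t ht => commute_of_mem_TaSet hg ht⟩

/-- Over an algebraically closed field of characteristic zero, `T_a` is an abelian
subgroup of `G_{2,a}` which equals its own centralizer in `G_{2,a}`
(hence is a maximal torus). -/
theorem TaSet_self_centralizing (k : Type*) [Field k] [IsAlgClosed k] [CharZero k]
    (a : k) (ha : a ≠ 0) :
    (TaSet (k := k)) ⊆ G2Set a ∧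
    (∀ s ∈ (TaSet (k := k)), ∀ t ∈ (TaSet (k := k)), s * t = t * s) ∧
    {g | g ∈ G2Set a ∧ ∀ t ∈ (TaSet (k := k)), g * t = t * g} = (TaSet (k := k)) := by
  have hk : 3 < ENat.card k := by simpa using ENat.natCast_lt_top 3
  exact TaSet_self_centralizing_general hk a
end
end

section
/- In the symmetric group on {1,...,7}, let σ_α := (2 3)(5 6) and σ_β := (1 2)(3 5)(6 7). Then: (i) the subgroup H generated by σ_α and σ_β has order 12; and (ii) the intersection of H with the subgroup W_{232} := { σ : σ({1,2}) = {1,2}, σ({3,4,5}) = {3,4,5}, σ({6,7}) = {6,7} } equals {identity, σ_β}. -/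
/-!
If `a` and `b` are involutions, right multiplication by either interchanges the subgroup `⟨ab⟩` and
its coset `⟨ab⟩b`, so `⟨a, b⟩ = ⟨ab⟩ ∪ ⟨ab⟩b`. When `b ∉ ⟨ab⟩`, the order of `⟨a, b⟩` is therefore
twice that of `ab`; when `b` lies in a subgroup `K` meeting `⟨ab⟩` trivially, `⟨a, b⟩` meets `K` in
`{1, b}`.

Here `r = σ_α σ_β` is the 6-cycle `(0 2 5 6 4 1)` in 0-based notation. A power of `r` preserving
`{0, 1}` either fixes `0`, and is then trivial, or sends `0` to `1`; in the latter case, commuting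
with `r`, it sends `5 = r² 0` to `r² 1 = 2` and so does not preserve `{5, 6}`.
-/

noncomputable section

/-- The permutation `σ_α = (2 3)(5 6)` of `{1,…,7}` (0-based: `(1 2)(4 5)` on `Fin 7`). -/
def sigmaAlpha : Equiv.Perm (Fin 7) := Equiv.swap 1 2 * Equiv.swap 4 5

/-- The permutation `σ_β = (1 2)(3 5)(6 7)` of `{1,…,7}` (0-based: `(0 1)(2 4)(5 6)`). -/
def sigmaBeta : Equiv.Perm (Fin 7) := Equiv.swap 0 1 * Equiv.swap 2 4 * Equiv.swap 5 6

/-- The subgroup `W₂₃₂` of permutations stabilizing the blocks `{1,2}`, `{3,4,5}`, `{6,7}`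
(0-based: `{0,1}`, `{2,3,4}`, `{5,6}`). -/
def W232perm : Set (Equiv.Perm (Fin 7)) :=
  {σ | (σ : Fin 7 → Fin 7) '' {0, 1} = {0, 1} ∧
       (σ : Fin 7 → Fin 7) '' {2, 3, 4} = {2, 3, 4} ∧
       (σ : Fin 7 → Fin 7) '' {5, 6} = {5, 6}}

section InvolutionPair

open Subgroup

variable {G : Type*} [Group G] {a b : G}

theorem zpowers_mul_le_closure_pair (a b : G) : zpowers (a * b) ≤ closure {a, b} :=
  zpowers_le_of_mem (mul_mem (subset_closure (by simp)) (subset_closure (by simp)))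

theorem mem_or_mul_mem_zpowers_mul_of_mem_closure_pair (ha : a * a = 1) (hb : b * b = 1) {x : G}
    (hx : x ∈ closure {a, b}) : x ∈ zpowers (a * b) ∨ x * b ∈ zpowers (a * b) := by
  have a_inv : a⁻¹ = a := inv_eq_of_mul_eq_one_left ha
  have b_inv : b⁻¹ = b := inv_eq_of_mul_eq_one_left hb
  have mul_a : ∀ y, y ∈ zpowers (a * b) ∨ y * b ∈ zpowers (a * b) →
      y * a ∈ zpowers (a * b) ∨ y * a * b ∈ zpowers (a * b) := by
    rintro y (hy | hyb)
    · right
      rw [mul_assoc]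
      exact mul_mem hy (mem_zpowers _)
    · left
      have mul_a_eq : y * a = y * b * (a * b)⁻¹ := by
        rw [mul_inv_rev, ← mul_assoc, mul_inv_cancel_right, a_inv]
      rw [mul_a_eq]
      exact mul_mem hyb (inv_mem (mem_zpowers _))
  have mul_b : ∀ y, y ∈ zpowers (a * b) ∨ y * b ∈ zpowers (a * b) →
      y * b ∈ zpowers (a * b) ∨ y * b * b ∈ zpowers (a * b) := by
    intro y hy
    rwa [mul_assoc, hb, mul_one, or_comm]
  induction hx using closure_induction_right with
  | one => exact .inl (one_mem _)
  | mul_right y _ g hg ih =>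
    rcases hg with rfl | rfl
    exacts [mul_a y ih, mul_b y ih]
  | mul_inv_cancel y _ g hg ih =>
    rcases hg with rfl | rfl
    · rw [a_inv]
      exact mul_a y ih
    · rw [b_inv]
      exact mul_b y ih

theorem notMem_zpowers_mul_of_not_commute (hab : ¬Commute a b) : b ∉ zpowers (a * b) := by
  rintro ⟨k, hk : (a * b) ^ k = b⟩
  have comm : Commute (a * b) b := by
    simpa only [hk] using (Commute.refl (a * b)).zpow_right k
  refine hab (mul_right_cancel (b := b) ?_)
  rw [comm.eq, mul_assoc]

theorem card_closure_pair_of_mul_self_eq_one (ha : a * a = 1) (hb : b * b = 1)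
    (hab : b ∉ zpowers (a * b)) : Nat.card (closure {a, b}) = 2 * orderOf (a * b) := by
  have relIndex_eq_two : (zpowers (a * b)).relIndex (closure {a, b}) = 2 :=
    relIndex_eq_two_iff_exists_notMem_and.mpr
      ⟨b, subset_closure (by simp), hab, fun _ hx =>
        (mem_or_mul_mem_zpowers_mul_of_mem_closure_pair ha hb hx).symm⟩
  rw [← relIndex_bot_left, ← relIndex_mul_relIndex _ _ _ bot_le (zpowers_mul_le_closure_pair a b),
    relIndex_bot_left, relIndex_eq_two, Nat.card_zpowers, mul_comm]

theorem coe_closure_pair_inf_eq_of_disjoint (ha : a * a = 1) (hb : b * b = 1) {K : Subgroup G}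
    (hbK : b ∈ K) (hK : Disjoint (zpowers (a * b)) K) :
    ((closure {a, b} ⊓ K : Subgroup G) : Set G) = {1, b} := by
  ext x
  constructor
  · rintro ⟨hx, hxK⟩
    rcases mem_or_mul_mem_zpowers_mul_of_mem_closure_pair ha hb hx with h | h
    · exact .inl (disjoint_def.mp hK h hxK)
    · have mul_b_eq_one : x * b = 1 := disjoint_def.mp hK h (mul_mem hxK hbK)
      exact .inr (mul_right_cancel (mul_b_eq_one.trans hb.symm))
  · rintro (rfl | rfl)
    exacts [one_mem _, ⟨subset_closure (by simp), hbK⟩]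

end InvolutionPair

section Blocks

open Equiv MulAction Subgroup
open scoped Pointwise

/-- `W₂₃₂` as a subgroup of `S₇`: the common stabilizer of the three blocks under the pointwise
action on finite sets, where membership is decidable. -/
def W232Subgroup : Subgroup (Perm (Fin 7)) :=
  stabilizer (Perm (Fin 7)) ({0, 1} : Finset (Fin 7)) ⊓
    (stabilizer (Perm (Fin 7)) ({2, 3, 4} : Finset (Fin 7)) ⊓
      stabilizer (Perm (Fin 7)) ({5, 6} : Finset (Fin 7)))

theorem coe_W232Subgroup : (W232Subgroup : Set (Perm (Fin 7))) = W232perm := by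
  ext σ
  simp only [W232Subgroup, W232perm, ← stabilizer_coe_finset, Finset.coe_insert,
    Finset.coe_singleton, SetLike.mem_coe, mem_inf, mem_stabilizer_iff, ← Set.image_smul,
    Perm.smul_def, Set.mem_ofPred_eq]

theorem sigmaAlpha_mul_self : sigmaAlpha * sigmaAlpha = 1 := by
  decide

theorem sigmaBeta_mul_self : sigmaBeta * sigmaBeta = 1 := by
  decide

theorem sigmaBeta_mem_W232Subgroup : sigmaBeta ∈ W232Subgroup := by
  simp only [W232Subgroup, mem_inf, mem_stabilizer_iff]
  decide

theorem sigmaAlpha_mul_sigmaBeta : sigmaAlpha * sigmaBeta = c[0, 2, 5, 6, 4, 1] := by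
  decide

theorem not_commute_sigmaAlpha_sigmaBeta : ¬Commute sigmaAlpha sigmaBeta := by
  intro h
  exact absurd (DFunLike.congr_fun h.eq 0) (by decide)

theorem isCycle_sigmaAlpha_mul_sigmaBeta : (sigmaAlpha * sigmaBeta).IsCycle := by
  rw [sigmaAlpha_mul_sigmaBeta]
  exact List.isCycle_formPerm (by decide) (by decide)

theorem orderOf_sigmaAlpha_mul_sigmaBeta : orderOf (sigmaAlpha * sigmaBeta) = 6 := by
  rw [isCycle_sigmaAlpha_mul_sigmaBeta.orderOf]
  decide

theorem disjoint_zpowers_sigmaAlpha_mul_sigmaBeta_W232Subgroup :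
    Disjoint (zpowers (sigmaAlpha * sigmaBeta)) W232Subgroup := by
  have sq_apply_zero : ((sigmaAlpha * sigmaBeta) ^ 2) 0 = 5 := by decide
  have sq_apply_one : ((sigmaAlpha * sigmaBeta) ^ 2) 1 = 2 := by decide
  have apply_zero_ne : (sigmaAlpha * sigmaBeta) 0 ≠ 0 := by decide
  set r := sigmaAlpha * sigmaBeta
  rw [disjoint_def]
  rintro σ hσ ⟨h01, -, h56⟩
  obtain ⟨n, rfl : r ^ n = σ⟩ := mem_powers_iff_mem_zpowers.mpr hσ
  have apply_zero_mem : (r ^ n) 0 ∈ ({0, 1} : Finset (Fin 7)) :=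
    (mem_stabilizer_finset.mp h01 0).mpr (by decide)
  have apply_five_mem : (r ^ n) 5 ∈ ({5, 6} : Finset (Fin 7)) :=
    (mem_stabilizer_finset.mp h56 5).mpr (by decide)
  have apply_five : (r ^ n) 5 = (r ^ 2) ((r ^ n) 0) := by
    rw [← sq_apply_zero, ← Perm.mul_apply, pow_mul_comm, Perm.mul_apply]
  have apply_zero_ne_one : (r ^ n) 0 ≠ 1 := by
    intro h
    rw [apply_five, h, sq_apply_one] at apply_five_mem
    exact absurd apply_five_mem (by decide)
  have apply_zero : (r ^ n) 0 = 0 := by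
    rw [Finset.mem_insert, Finset.mem_singleton] at apply_zero_mem
    exact apply_zero_mem.resolve_right apply_zero_ne_one
  exact (isCycle_sigmaAlpha_mul_sigmaBeta.pow_eq_one_iff' apply_zero_ne).mpr apply_zero

end Blocks

/-- The subgroup of `S₇` generated by `σ_α` and `σ_β` has order `12`, and its intersection
with `W₂₃₂` is `{1, σ_β}`. -/
theorem weyl_in_S7_card_and_intersection :
    Nat.card (Subgroup.closure {sigmaAlpha, sigmaBeta} : Subgroup (Equiv.Perm (Fin 7))) = 12 ∧
    {σ : Equiv.Perm (Fin 7) |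
        σ ∈ Subgroup.closure {sigmaAlpha, sigmaBeta} ∧ σ ∈ W232perm} =
      {1, sigmaBeta} := by
  constructor
  · rw [card_closure_pair_of_mul_self_eq_one sigmaAlpha_mul_self sigmaBeta_mul_self
      (notMem_zpowers_mul_of_not_commute not_commute_sigmaAlpha_sigmaBeta),
      orderOf_sigmaAlpha_mul_sigmaBeta]
  · rw [← coe_W232Subgroup]
    exact coe_closure_pair_inf_eq_of_disjoint sigmaAlpha_mul_self sigmaBeta_mul_self
      sigmaBeta_mem_W232Subgroup
      disjoint_zpowers_sigmaAlpha_mul_sigmaBeta_W232Subgroup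
end
end

section
/- Let k ≥ 4 be an even integer and let s ∈ ℚ with s ≥ 0. In the ℚ^2 model of the G_2 root lattice, set λ_0 := ((k−4)/2)·(2,3) and σ := s·(2,3) + (0,1) (the slope of the critical p-stabilization Π_F^{(p)}). Then: (1) σ − λ_0 + M_β*λ_0 = s·(2,3), which is a nonnegative rational combination of the positive roots (so the slope σ is critical with respect to λ_0); and (2) if k > 4s + 4, then for every w in the Weyl group W with w ≠ 1 and w ≠ M_β, the vector σ − λ_0 + w*λ_0 is not a nonnegative rational combination of the positive roots — indeed its first coordinate (the coefficient of α) is negative. -/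
/-!
The Weyl group acts on the root lattice by integral isometries. If short roots have squared length
`2`, a vector `xα + yβ` of squared length `q` satisfies `3 x ^ 2 ≤ 2 q`; for integral `x` and `y`
this gives `x ≤ 3` on the orbit of `ρ` and `x ≤ 2` on the orbit of the highest root
`θ = 2α + 3β`, where `x = 2` is attained only at `θ`. An isometry fixing `θ` acts by `±1` on its
orthogonal complement `ℚβ`, so it is `1` or `w_β`. For every other `w`, the `α`-coefficients of
`wθ` and `wρ` are thus at most `1` and `3`, so with `λ₀ = mθ` the vector `σ - λ₀ + w * λ₀` has
`α`-coefficient at most `2s - 2m + m + 3 - 3 = 2s - m`.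
-/

open Matrix

noncomputable section

/-- The simple reflection `w_α` of the `G₂` Weyl group in the `ℚ²` model
(`α ↦ −α`, `β ↦ α+β`), acting on column vectors `(x,y) = xα + yβ`. -/
def MAlpha : Matrix (Fin 2) (Fin 2) ℚ := !![-1, 1; 0, 1]

/-- The simple reflection `w_β` (`α ↦ α+3β`, `β ↦ −β`). -/
def MBeta : Matrix (Fin 2) (Fin 2) ℚ := !![1, 0; 3, -1]

/-- The Weyl group `W` of `G₂`: the subgroup of `GL₂(ℚ)` generated by `M_α` and `M_β`. -/
def WeylG2 : Subgroup (Matrix (Fin 2) (Fin 2) ℚ)ˣ :=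
  Subgroup.closure {u : (Matrix (Fin 2) (Fin 2) ℚ)ˣ |
    (u : Matrix (Fin 2) (Fin 2) ℚ) = MAlpha ∨ (u : Matrix (Fin 2) (Fin 2) ℚ) = MBeta}

/-- `ρ = 3α + 5β`. -/
def rhoG2 : Fin 2 → ℚ := ![3, 5]

/-- The dot-action `w * λ := w(λ + ρ) − ρ`. -/
def dotAct (w : Matrix (Fin 2) (Fin 2) ℚ) (l : Fin 2 → ℚ) : Fin 2 → ℚ :=
  w.mulVec (l + rhoG2) - rhoG2

/-- The weight `λ₀ = ((k−4)/2)·(2α+3β)`. -/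
def lamZero (k : ℤ) : Fin 2 → ℚ := (((k : ℚ) - 4) / 2) • ![2, 3]

/-- The slope `σ = s·(2α+3β) + β` of the critical `p`-stabilization `Π_F^{(p)}`. -/
def slopeVec (s : ℚ) : Fin 2 → ℚ := s • ![2, 3] + ![0, 1]

section Isometry

variable {n R : Type*} [Fintype n] [DecidableEq n] [CommRing R]

/-- The group of invertible matrices preserving the bilinear form with Gram matrix `G`. -/
def isometryGroup (G : Matrix n n R) : Subgroup (Matrix n n R)ˣ where
  carrier := {u | (u : Matrix n n R)ᵀ * G * u = G}
  one_mem' := by simp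
  mul_mem' {u v} hu hv := by
    rw [Set.mem_ofPred_eq] at hu hv ⊢
    calc ((u * v : (Matrix n n R)ˣ) : Matrix n n R)ᵀ * G * (u * v : (Matrix n n R)ˣ)
        = (v : Matrix n n R)ᵀ * ((u : Matrix n n R)ᵀ * G * u) * v := by
          simp only [Units.val_mul, transpose_mul, Matrix.mul_assoc]
      _ = G := by rw [hu, hv]
  inv_mem' {u} hu := by
    rw [Set.mem_ofPred_eq] at hu ⊢
    have hinv : (↑u⁻¹ : Matrix n n R)ᵀ * (u : Matrix n n R)ᵀ = 1 := by
      rw [← transpose_mul, Units.mul_inv, transpose_one]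
    calc (↑u⁻¹ : Matrix n n R)ᵀ * G * ↑u⁻¹
        = (↑u⁻¹ : Matrix n n R)ᵀ * ((u : Matrix n n R)ᵀ * G * u) * ↑u⁻¹ := by rw [hu]
      _ = ((↑u⁻¹ : Matrix n n R)ᵀ * (u : Matrix n n R)ᵀ) * G * (u * ↑u⁻¹) := by
          simp only [Matrix.mul_assoc]
      _ = G := by rw [hinv, Units.mul_inv, Matrix.one_mul, Matrix.mul_one]

lemma mem_isometryGroup {G : Matrix n n R} {u : (Matrix n n R)ˣ} :
    u ∈ isometryGroup G ↔ (u : Matrix n n R)ᵀ * G * u = G :=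
  Iff.rfl

lemma dotProduct_mulVec_of_mem_isometryGroup {G : Matrix n n R} {u : (Matrix n n R)ˣ}
    (hu : u ∈ isometryGroup G) (v w : n → R) :
    ((u : Matrix n n R) *ᵥ v) ⬝ᵥ G *ᵥ ((u : Matrix n n R) *ᵥ w) = v ⬝ᵥ G *ᵥ w := by
  rw [mulVec_mulVec, ← vecMul_transpose, ← dotProduct_mulVec, mulVec_mulVec, ← Matrix.mul_assoc,
    mem_isometryGroup.mp hu]

end Isometry

/-- The Gram matrix of the simple roots `α`, `β` of `G₂`, for the invariant inner product on the
root lattice in which the short root `β` has squared length `2`. -/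
def gramG2 : Matrix (Fin 2) (Fin 2) ℤ := !![6, -3; -3, 2]

lemma dotProduct_gramG2_mulVec (v w : Fin 2 → ℤ) :
    v ⬝ᵥ gramG2 *ᵥ w = 6 * v 0 * w 0 - 3 * (v 0 * w 1 + v 1 * w 0) + 2 * v 1 * w 1 := by
  simp only [gramG2, dotProduct, mulVec, Fin.sum_univ_two, of_apply, cons_val_zero, cons_val_one]
  ring

lemma three_mul_sq_le_gramG2 (v : Fin 2 → ℤ) : 3 * v 0 ^ 2 ≤ 2 * (v ⬝ᵥ gramG2 *ᵥ v) := by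
  have complete_square :
      2 * (v ⬝ᵥ gramG2 *ᵥ v) = 3 * v 0 ^ 2 + (3 * v 0 - 2 * v 1) ^ 2 := by
    rw [dotProduct_gramG2_mulVec]
    ring
  rw [complete_square]
  exact le_add_of_nonneg_right (sq_nonneg _)

-- `14` and `6` are the squared lengths of `ρ` and of the highest root `2α + 3β`.
lemma apply_zero_le_three_of_gramG2_eq_fourteen {v : Fin 2 → ℤ} (hv : v ⬝ᵥ gramG2 *ᵥ v = 14) :
    v 0 ≤ 3 := by
  have hsq := three_mul_sq_le_gramG2 v
  rw [hv] at hsq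
  nlinarith

lemma apply_zero_le_one_or_eq_of_gramG2_eq_six {v : Fin 2 → ℤ} (hv : v ⬝ᵥ gramG2 *ᵥ v = 6) :
    v 0 ≤ 1 ∨ v = ![2, 3] := by
  refine or_iff_not_imp_left.mpr fun hv_gt ↦ ?_
  have hsq := three_mul_sq_le_gramG2 v
  rw [hv] at hsq
  have hv0 : v 0 = 2 := le_antisymm (by nlinarith) (by lia)
  rw [dotProduct_gramG2_mulVec, hv0] at hv
  have hv1 : v 1 - 3 = 0 := pow_eq_zero_iff two_ne_zero |>.mp (by linarith : (v 1 - 3) ^ 2 = 0)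
  ext i
  fin_cases i
  · exact hv0
  · exact sub_eq_zero.mp hv1

lemma eq_one_or_eq_of_mulVec_highestRoot_eq {u : (Matrix (Fin 2) (Fin 2) ℤ)ˣ}
    (hu : u ∈ isometryGroup gramG2)
    (hfix : (u : Matrix (Fin 2) (Fin 2) ℤ) *ᵥ ![2, 3] = ![2, 3]) :
    (u : Matrix (Fin 2) (Fin 2) ℤ) = 1 ∨
      (u : Matrix (Fin 2) (Fin 2) ℤ) = !![1, 0; 3, -1] := by
  have horth := dotProduct_mulVec_of_mem_isometryGroup hu ![2, 3] ![0, 1]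
  have hnorm := dotProduct_mulVec_of_mem_isometryGroup hu ![0, 1] ![0, 1]
  rw [hfix, dotProduct_gramG2_mulVec, dotProduct_gramG2_mulVec] at horth
  rw [dotProduct_gramG2_mulVec, dotProduct_gramG2_mulVec] at hnorm
  have hfix0 := congrFun hfix 0
  have hfix1 := congrFun hfix 1
  generalize (u : Matrix (Fin 2) (Fin 2) ℤ) = N at *
  simp only [mulVec, dotProduct, Fin.sum_univ_two, cons_val_zero, cons_val_one, mul_zero, mul_one,
    zero_add] at horth hnorm hfix0 hfix1
  have h01 : N 0 1 = 0 := by linarith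
  have h00 : N 0 0 = 1 := by linarith
  have h11 : N 1 1 = 1 ∨ N 1 1 = -1 := sq_eq_one_iff.mp (by rw [h01] at hnorm; linarith)
  rw [eta_fin_two N, one_fin_two, h00, h01]
  rcases h11 with h11 | h11
  · left
    rw [h11, show N 1 0 = 0 by linarith]
  · right
    rw [h11, show N 1 0 = 3 by linarith]

lemma mAlpha_eq_map_intCast :
    MAlpha = (!![-1, 1; 0, 1] : Matrix (Fin 2) (Fin 2) ℤ).map (Int.castRingHom ℚ) := by
  ext i j
  fin_cases i <;> fin_cases j <;> simp [MAlpha]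

lemma mBeta_eq_map_intCast :
    MBeta = (!![1, 0; 3, -1] : Matrix (Fin 2) (Fin 2) ℤ).map (Int.castRingHom ℚ) := by
  ext i j
  fin_cases i <;> fin_cases j <;> simp [MBeta]

lemma weylG2_le_map_isometryGroup :
    WeylG2 ≤ (isometryGroup gramG2).map
      (Units.map (Int.castRingHom ℚ).mapMatrix.toMonoidHom) := by
  refine (Subgroup.closure_le _).mpr ?_
  rintro w (hw | hw)
  · refine ⟨⟨!![-1, 1; 0, 1], !![-1, 1; 0, 1], by decide, by decide⟩,
      mem_isometryGroup.mpr (by decide), Units.ext ?_⟩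
    exact (hw.trans mAlpha_eq_map_intCast).symm
  · refine ⟨⟨!![1, 0; 3, -1], !![1, 0; 3, -1], by decide, by decide⟩,
      mem_isometryGroup.mpr (by decide), Units.ext ?_⟩
    exact (hw.trans mBeta_eq_map_intCast).symm

lemma exists_mem_isometryGroup_of_mem_weylG2 {w : (Matrix (Fin 2) (Fin 2) ℚ)ˣ}
    (hw : w ∈ WeylG2) :
    ∃ u ∈ isometryGroup gramG2,
      (w : Matrix (Fin 2) (Fin 2) ℚ) =
        (u : Matrix (Fin 2) (Fin 2) ℤ).map (Int.castRingHom ℚ) := by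
  obtain ⟨u, hu, rfl⟩ := weylG2_le_map_isometryGroup hw
  exact ⟨u, hu, rfl⟩

lemma mulVec_rhoG2_apply_zero_le {w : (Matrix (Fin 2) (Fin 2) ℚ)ˣ} (hw : w ∈ WeylG2) :
    ((w : Matrix (Fin 2) (Fin 2) ℚ) *ᵥ rhoG2) 0 ≤ 3 := by
  obtain ⟨u, hu, hwu⟩ := exists_mem_isometryGroup_of_mem_weylG2 hw
  have hcast : rhoG2 = Int.castRingHom ℚ ∘ ![3, 5] := by
    ext i; fin_cases i <;> rfl
  rw [hwu, hcast, ← RingHom.map_mulVec, eq_intCast]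
  have hle := apply_zero_le_three_of_gramG2_eq_fourteen
    (dotProduct_mulVec_of_mem_isometryGroup hu ![3, 5] ![3, 5])
  exact_mod_cast hle

lemma mulVec_highestRoot_apply_zero_le {w : (Matrix (Fin 2) (Fin 2) ℚ)ˣ} (hw : w ∈ WeylG2)
    (hw_one : (w : Matrix (Fin 2) (Fin 2) ℚ) ≠ 1)
    (hw_beta : (w : Matrix (Fin 2) (Fin 2) ℚ) ≠ MBeta) :
    ((w : Matrix (Fin 2) (Fin 2) ℚ) *ᵥ ![2, 3]) 0 ≤ 1 := by
  obtain ⟨u, hu, hwu⟩ := exists_mem_isometryGroup_of_mem_weylG2 hw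
  have hcast : (![2, 3] : Fin 2 → ℚ) = Int.castRingHom ℚ ∘ ![2, 3] := by
    ext i; fin_cases i <;> rfl
  rcases apply_zero_le_one_or_eq_of_gramG2_eq_six
    (dotProduct_mulVec_of_mem_isometryGroup hu ![2, 3] ![2, 3]) with hle | hfix
  · rw [hwu, hcast, ← RingHom.map_mulVec, eq_intCast]
    exact_mod_cast hle
  · rcases eq_one_or_eq_of_mulVec_highestRoot_eq hu hfix with hu_one | hu_beta
    · exact absurd (by simp [hwu, hu_one]) hw_one
    · exact absurd (by rw [hwu, hu_beta, mBeta_eq_map_intCast]) hw_beta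

lemma dotAct_mBeta (l : Fin 2 → ℚ) :
    dotAct MBeta l = l + (3 * l 0 - 2 * l 1 - 1) • ![0, 1] := by
  ext i
  fin_cases i <;>
    simp only [dotAct, MBeta, rhoG2, mulVec, dotProduct, Fin.sum_univ_two, Pi.add_apply,
      Pi.sub_apply, Pi.smul_apply, smul_eq_mul, of_apply, cons_val_zero, cons_val_one,
      Fin.zero_eta, Fin.mk_one] <;>
    ring

lemma slopeVec_sub_add_dotAct_mBeta (m s : ℚ) :
    slopeVec s - m • ![2, 3] + dotAct MBeta (m • ![2, 3]) = s • ![2, 3] := by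
  have hpair : 3 * (m • ![2, 3] : Fin 2 → ℚ) 0 - 2 * (m • ![2, 3] : Fin 2 → ℚ) 1 - 1 = -1 := by
    simp only [Pi.smul_apply, smul_eq_mul, cons_val_zero, cons_val_one]
    ring
  rw [dotAct_mBeta, hpair, slopeVec]
  module

lemma slopeVec_sub_add_dotAct_apply_zero (m s : ℚ) (M : Matrix (Fin 2) (Fin 2) ℚ) :
    (slopeVec s - m • (![2, 3] : Fin 2 → ℚ) + dotAct M (m • ![2, 3])) 0 =
      2 * s - 2 * m + m * (M *ᵥ ![2, 3]) 0 + (M *ᵥ rhoG2) 0 - 3 := by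
  simp only [slopeVec, dotAct, mulVec_add, mulVec_smul, Pi.add_apply, Pi.sub_apply, Pi.smul_apply,
    smul_eq_mul, cons_val_zero, rhoG2]
  ring

theorem slope_criticality_general (m s : ℚ) (hs : 0 ≤ s) :
    (slopeVec s - m • ![2, 3] + dotAct MBeta (m • ![2, 3]) = s • ![2, 3] ∧
      ∀ i : Fin 2, 0 ≤ (s • (![2, 3] : Fin 2 → ℚ)) i) ∧
    (2 * s < m →
      ∀ w ∈ WeylG2, (w : Matrix (Fin 2) (Fin 2) ℚ) ≠ 1 →
        (w : Matrix (Fin 2) (Fin 2) ℚ) ≠ MBeta →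
        (slopeVec s - m • (![2, 3] : Fin 2 → ℚ) +
          dotAct (w : Matrix (Fin 2) (Fin 2) ℚ) (m • ![2, 3])) 0 < 0) := by
  have hroot_nonneg : (0 : Fin 2 → ℚ) ≤ ![2, 3] := by
    intro i; fin_cases i <;> simp
  refine ⟨⟨slopeVec_sub_add_dotAct_mBeta m s, smul_nonneg hs hroot_nonneg⟩, ?_⟩
  intro hsm w hw hw_one hw_beta
  have hm : 0 ≤ m := by linarith
  have hroot := mul_le_mul_of_nonneg_left (mulVec_highestRoot_apply_zero_le hw hw_one hw_beta) hm
  have hrho := mulVec_rhoG2_apply_zero_le hw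
  rw [slopeVec_sub_add_dotAct_apply_zero]
  linarith

/-- The slope `σ = s(2α+3β)+β` is critical with respect to `λ₀`:
`σ − λ₀ + w_β*λ₀ = s(2α+3β)`, a nonnegative combination of the positive roots; and if
`k > 4s+4` then for every other nontrivial Weyl element `w` the vector `σ − λ₀ + w*λ₀`
has negative `α`-coefficient, hence is not a nonnegative combination of positive roots. -/
theorem slope_criticality (k : ℤ) (hk : 4 ≤ k) (hke : Even k) (s : ℚ) (hs : 0 ≤ s) :
    (slopeVec s - lamZero k + dotAct MBeta (lamZero k) = s • ![2, 3] ∧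
      ∀ i : Fin 2, 0 ≤ (s • (![2, 3] : Fin 2 → ℚ)) i) ∧
    ((k : ℚ) > 4 * s + 4 →
      ∀ w ∈ WeylG2, (w : Matrix (Fin 2) (Fin 2) ℚ) ≠ 1 →
        (w : Matrix (Fin 2) (Fin 2) ℚ) ≠ MBeta →
        (slopeVec s - lamZero k +
          dotAct (w : Matrix (Fin 2) (Fin 2) ℚ) (lamZero k)) 0 < 0) := by
  obtain ⟨hcrit, hneg⟩ := slope_criticality_general (((k : ℚ) - 4) / 2) s hs
  exact ⟨hcrit, fun hks ↦ hneg (by linarith)⟩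
end
end

section
/- In the block-representation situation, suppose there exists g_0 ∈ G with g_{66}(g_0)·g_{67}(g_0)·g_{76}(g_0)·g_{77}(g_0) ≠ 0. Then the coefficients of the invariant trilinear form satisfy a_{147} = a_{156} = a_{237} = −a_{246}. -/
open Matrix

noncomputable section

/-- The alternating trilinear form
`a₁₄₇ v₁^*∧v₄^*∧v₇^* + a₁₅₆ v₁^*∧v₅^*∧v₆^* + a₂₃₇ v₂^*∧v₃^*∧v₇^* + a₂₄₆ v₂^*∧v₄^*∧v₆^* + a₃₄₅ v₃^*∧v₄^*∧v₅^*`. -/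
def triForm {k : Type*} [CommRing k] (a₁₄₇ a₁₅₆ a₂₃₇ a₂₄₆ a₃₄₅ : k)
    (u v w : Fin 7 → k) : k :=
  a₁₄₇ * wedge3 0 3 6 u v w + a₁₅₆ * wedge3 0 4 5 u v w +
    a₂₃₇ * wedge3 1 2 6 u v w + a₂₄₆ * wedge3 1 3 5 u v w +
    a₃₄₅ * wedge3 2 3 4 u v w

/-- `d(g) = g₆₆g₇₇ − g₆₇g₇₆` (0-based entries). -/
def dLow {k : Type*} [CommRing k] (M : Matrix (Fin 7) (Fin 7) k) : k :=
  M 5 5 * M 6 6 - M 5 6 * M 6 5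

/-!
Over a block upper triangular matrix with diagonal blocks `W^∨`, `ad W` and `W`, the terms of the
form that involve `v₁` or `v₂` define a pairing of the three blocks, and the theorem says that this
pairing is a multiple of the evaluation `(x, Y, z) ↦ x (Y z)`, with `v₂, v₁` as the basis of `W^∨`
dual to `v₆, v₇`.

Write `p, q, r, s` for `g₆₆, g₆₇, g₇₆, g₇₇` and `d = ps - qr`. The form vanishes on the three basis
triples below, and applying `g` to them and multiplying by `d²` gives

* `(v₁, v₃, v₆)`: `p²r² (a₁₄₇ - a₁₅₆ - a₂₃₇ - a₂₄₆) = 0`;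
* `(v₁, v₃, v₇)`: `pr (ps (a₁₄₇ - a₂₃₇) - qr (a₁₅₆ + a₂₄₆)) = 0`;
* `(v₂, v₃, v₆)`: `pr (ps (a₂₃₇ + a₂₄₆) - qr (a₁₄₇ - a₁₅₆)) = 0`.

The first relation turns the other two into `prd (a₁₄₇ - a₂₃₇) = 0` and `prd (a₁₄₇ - a₁₅₆) = 0`.
-/

open scoped nonZeroDivisors

section CommRing

variable {R : Type*} [CommRing R] {a₁₄₇ a₁₅₆ a₂₃₇ a₂₄₆ a₃₄₅ : R}

lemma triForm_eq_of_flag {u v : Fin 7 → R} (hu : ∀ m, 2 ≤ m → u m = 0)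
    (hv : ∀ m, 5 ≤ m → v m = 0) (w : Fin 7 → R) :
    triForm a₁₄₇ a₁₅₆ a₂₃₇ a₂₄₆ a₃₄₅ u v w =
      a₁₄₇ * (u 0 * v 3 * w 6) + a₁₅₆ * (u 0 * v 4 * w 5) +
        a₂₃₇ * (u 1 * v 2 * w 6) + a₂₄₆ * (u 1 * v 3 * w 5) := by
  simp only [triForm, wedge3, hu 2 (by decide), hu 3 (by decide), hu 4 (by decide),
    hu 5 (by decide), hu 6 (by decide), hv 5 (by decide), hv 6 (by decide)]
  ring

lemma triForm_smul_smul (c : R) (u v w : Fin 7 → R) :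
    triForm a₁₄₇ a₁₅₆ a₂₃₇ a₂₄₆ a₃₄₅ (c • u) (c • v) w =
      c ^ 2 * triForm a₁₄₇ a₁₅₆ a₂₃₇ a₂₄₆ a₃₄₅ u v w := by
  simp only [triForm, wedge3, Pi.smul_apply, smul_eq_mul]
  ring

lemma entries_relation_of_triForm_single_eq_zero {M : Matrix (Fin 7) (Fin 7) R}
    (hform : ∀ u v w : Fin 7 → R,
      triForm a₁₄₇ a₁₅₆ a₂₃₇ a₂₄₆ a₃₄₅ (M *ᵥ u) (M *ᵥ v) (M *ᵥ w) =
        triForm a₁₄₇ a₁₅₆ a₂₃₇ a₂₄₆ a₃₄₅ u v w)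
    {i j l : Fin 7} (hi : ∀ m, 2 ≤ m → M m i = 0) (hj : ∀ m, 5 ≤ m → M m j = 0)
    (hijl : triForm a₁₄₇ a₁₅₆ a₂₃₇ a₂₄₆ a₃₄₅
      (Pi.single i 1) (Pi.single j 1) (Pi.single l 1) = 0) (c : R) :
    a₁₄₇ * (c * M 0 i * (c * M 3 j) * M 6 l) + a₁₅₆ * (c * M 0 i * (c * M 4 j) * M 5 l) +
      a₂₃₇ * (c * M 1 i * (c * M 2 j) * M 6 l) +
        a₂₄₆ * (c * M 1 i * (c * M 3 j) * M 5 l) = 0 := by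
  have hcols : triForm a₁₄₇ a₁₅₆ a₂₃₇ a₂₄₆ a₃₄₅ (c • M.col i) (c • M.col j) (M.col l) = 0 := by
    simp only [triForm_smul_smul, ← mulVec_single_one, hform, hijl, mul_zero]
  rwa [triForm_eq_of_flag (fun m hm ↦ by simp [hi m hm]) (fun m hm ↦ by simp [hj m hm])] at hcols

lemma coeffs_equal_of_relations {p q r s a b c e : R} (hpr : p * r ∈ R⁰)
    (hd : p * s - q * r ∈ R⁰) (h₁ : p ^ 2 * r ^ 2 * (a - b - c - e) = 0)
    (h₂ : p * r * (p * s * (a - c) - q * r * (b + e)) = 0)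
    (h₃ : p * r * (p * s * (c + e) - q * r * (a - b)) = 0) :
    a = b ∧ b = c ∧ c = -e := by
  have hsum : a - b - c - e = 0 := by
    refine (mul_left_mem_nonZeroDivisors_eq_zero_iff (pow_mem hpr 2)).1 ?_
    rwa [mul_pow]
  have hac : a - c = 0 := by
    refine (mul_left_mem_nonZeroDivisors_eq_zero_iff (mul_mem hpr hd)).1 ?_
    linear_combination h₂ - p * r * (q * r) * hsum
  have hab : a - b = 0 := by
    refine (mul_left_mem_nonZeroDivisors_eq_zero_iff (mul_mem hpr hd)).1 ?_
    linear_combination h₃ + p * r * (p * s) * hsum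
  exact ⟨by linear_combination hab, by linear_combination hac - hab,
    by linear_combination hab - hsum⟩

theorem triForm_coeffs_equal_general {M : Matrix (Fin 7) (Fin 7) R}
    (hcol₀ : ∀ m, 2 ≤ m → M m 0 = 0) (hcol₁ : ∀ m, 2 ≤ m → M m 1 = 0)
    (hcol₂ : ∀ m, 5 ≤ m → M m 2 = 0)
    (h₀₀ : dLow M * M 0 0 = M 5 5) (h₀₁ : dLow M * M 0 1 = -M 5 6)
    (h₁₀ : dLow M * M 1 0 = -M 6 5) (h₁₁ : dLow M * M 1 1 = M 6 6)
    (h₂₂ : dLow M * M 2 2 = M 5 5 ^ 2) (h₃₂ : dLow M * M 3 2 = M 5 5 * M 6 5)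
    (h₄₂ : dLow M * M 4 2 = -(M 6 5 ^ 2))
    (hform : ∀ u v w : Fin 7 → R,
      triForm a₁₄₇ a₁₅₆ a₂₃₇ a₂₄₆ a₃₄₅ (M *ᵥ u) (M *ᵥ v) (M *ᵥ w) =
        triForm a₁₄₇ a₁₅₆ a₂₃₇ a₂₄₆ a₃₄₅ u v w)
    (hM : M 5 5 * M 6 5 ∈ R⁰) :
    a₁₄₇ = a₁₅₆ ∧ a₁₅₆ = a₂₃₇ ∧ a₂₃₇ = -a₂₄₆ := by
  have hd : dLow M ∈ R⁰ := by
    have hp := (mul_mem_nonZeroDivisors.1 hM).1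
    rw [← h₀₀] at hp
    exact (mul_mem_nonZeroDivisors.1 hp).1
  have h₁₃₆ := entries_relation_of_triForm_single_eq_zero hform hcol₀ hcol₂ (l := 5)
    (by simp [triForm, wedge3]) (dLow M)
  have h₁₃₇ := entries_relation_of_triForm_single_eq_zero hform hcol₀ hcol₂ (l := 6)
    (by simp [triForm, wedge3]) (dLow M)
  have h₂₃₆ := entries_relation_of_triForm_single_eq_zero hform hcol₁ hcol₂ (l := 5)
    (by simp [triForm, wedge3]) (dLow M)
  rw [h₂₂, h₃₂, h₄₂, h₀₀, h₁₀] at h₁₃₆ h₁₃₇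
  rw [h₂₂, h₃₂, h₄₂, h₀₁, h₁₁] at h₂₃₆
  refine coeffs_equal_of_relations hM hd ?_ ?_ ?_
  · linear_combination h₁₃₆
  · linear_combination h₁₃₇
  · linear_combination h₂₃₆

end CommRing

/-- In the block-representation situation, if some `g₀` has
`g₆₆g₆₇g₇₆g₇₇ ≠ 0`, then `a₁₄₇ = a₁₅₆ = a₂₃₇ = −a₂₄₆`. -/
theorem triForm_coeffs_equal {k : Type*} [Field k] [CharZero k]
    {G : Type*} [Group G] (ρ : G →* Matrix (Fin 7) (Fin 7) k)
    (hblock : ∀ g : G, ∀ i j : Fin 7,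
      ((2 ≤ (i : ℕ) ∧ (j : ℕ) ≤ 1) ∨ (5 ≤ (i : ℕ) ∧ 2 ≤ (j : ℕ) ∧ (j : ℕ) ≤ 4)) →
      ρ g i j = 0)
    (hρ1 : ∀ g : G,
      dLow (ρ g) * ρ g 0 0 = ρ g 5 5 ∧
      dLow (ρ g) * ρ g 0 1 = -ρ g 5 6 ∧
      dLow (ρ g) * ρ g 1 0 = -ρ g 6 5 ∧
      dLow (ρ g) * ρ g 1 1 = ρ g 6 6)
    (hρ2 : ∀ g : G,
      dLow (ρ g) * ρ g 2 2 = ρ g 5 5 ^ 2 ∧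
      dLow (ρ g) * ρ g 2 3 = 2 * (ρ g 5 5 * ρ g 5 6) ∧
      dLow (ρ g) * ρ g 2 4 = -(ρ g 5 6 ^ 2) ∧
      dLow (ρ g) * ρ g 3 2 = ρ g 5 5 * ρ g 6 5 ∧
      dLow (ρ g) * ρ g 3 3 = ρ g 5 5 * ρ g 6 6 + ρ g 5 6 * ρ g 6 5 ∧
      dLow (ρ g) * ρ g 3 4 = -(ρ g 5 6 * ρ g 6 6) ∧
      dLow (ρ g) * ρ g 4 2 = -(ρ g 6 5 ^ 2) ∧
      dLow (ρ g) * ρ g 4 3 = -(2 * (ρ g 6 5 * ρ g 6 6)) ∧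
      dLow (ρ g) * ρ g 4 4 = ρ g 6 6 ^ 2)
    (a₁₄₇ a₁₅₆ a₂₃₇ a₂₄₆ a₃₄₅ : k)
    (hform : ∀ (g : G) (u v w : Fin 7 → k),
      triForm a₁₄₇ a₁₅₆ a₂₃₇ a₂₄₆ a₃₄₅
          ((ρ g).mulVec u) ((ρ g).mulVec v) ((ρ g).mulVec w) =
        triForm a₁₄₇ a₁₅₆ a₂₃₇ a₂₄₆ a₃₄₅ u v w)
    (g₀ : G) (hg₀ : ρ g₀ 5 5 * ρ g₀ 5 6 * ρ g₀ 6 5 * ρ g₀ 6 6 ≠ 0) :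
    a₁₄₇ = a₁₅₆ ∧ a₁₅₆ = a₂₃₇ ∧ a₂₃₇ = -a₂₄₆ := by
  obtain ⟨h₀₀, h₀₁, h₁₀, h₁₁⟩ := hρ1 g₀
  obtain ⟨h₂₂, -, -, h₃₂, -, -, h₄₂, -, -⟩ := hρ2 g₀
  have hpr : ρ g₀ 5 5 * ρ g₀ 6 5 ≠ 0 := by
    refine fun h ↦ hg₀ ?_
    linear_combination ρ g₀ 5 6 * ρ g₀ 6 6 * h
  exact triForm_coeffs_equal_general (fun m hm ↦ hblock g₀ m 0 (.inl ⟨hm, by decide⟩))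
    (fun m hm ↦ hblock g₀ m 1 (.inl ⟨hm, by decide⟩))
    (fun m hm ↦ hblock g₀ m 2 (.inr ⟨hm, by decide⟩))
    h₀₀ h₀₁ h₁₀ h₁₁ h₂₂ h₃₂ h₄₂ (hform g₀) (mem_nonZeroDivisors_of_ne_zero hpr)
end
end
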